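/- For r ∈ (0,1) and θ ∈ (0, 2π) define p(r,θ) = 2√r·cos(θ/2) and q(r,θ) = −2√r·(θ·cos(θ/2) + (log r − 2)·sin(θ/2)). Then (∂p/∂r)·(∂q/∂θ) − (∂p/∂θ)·(∂q/∂r) = −log r. Equivalently, 2 dp ∧ dq = −2 log r · dr ∧ dθ, so (p,q) are Darboux coordinates for the Kähler form of the metric g = −|z|^{-1} log|z| |dz|² on the slit punctured disc. -/

import Mathlib

open Real Set

/-- `p(r,θ) = 2√r cos(θ/2)`, the real part of the special coordinate `Z = 2√z`. -/
noncomputable def pCoord (r θ : ℝ) : ℝ := 2 * Real.sqrt r * Real.cos (θ / 2)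

/-- `q(r,θ) = −2√r (θ cos(θ/2) + (log r − 2) sin(θ/2))`, minus the real part of `W`. -/
noncomputable def qCoord (r θ : ℝ) : ℝ :=
  -2 * Real.sqrt r * (θ * Real.cos (θ / 2) + (Real.log r - 2) * Real.sin (θ / 2))

theorem stmt8 :
    ∀ r ∈ Ioo (0 : ℝ) 1, ∀ θ ∈ Ioo (0 : ℝ) (2 * π),
      deriv (fun r' => pCoord r' θ) r * deriv (fun θ' => qCoord r θ') θ
        - deriv (fun θ' => pCoord r θ') θ * deriv (fun r' => qCoord r' θ) r
        = -Real.log r := by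
  intro r hr θ _
  have hr0 : (0 : ℝ) < r := hr.1
  have hs : HasDerivAt (fun x : ℝ => Real.sqrt x) (1 / (2 * Real.sqrt r)) r :=
    Real.hasDerivAt_sqrt hr0.ne'
  have hl : HasDerivAt Real.log r⁻¹ r := Real.hasDerivAt_log hr0.ne'
  have hh : HasDerivAt (fun x : ℝ => x / 2) (1 / 2) θ := (hasDerivAt_id θ).div_const 2
  have hc : HasDerivAt (fun x : ℝ => Real.cos (x / 2)) (-Real.sin (θ / 2) * (1 / 2)) θ := hh.cos
  have hS : HasDerivAt (fun x : ℝ => Real.sin (x / 2)) (Real.cos (θ / 2) * (1 / 2)) θ := hh.sin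
  have h1 : HasDerivAt (fun r' => pCoord r' θ)
      (2 * (1 / (2 * Real.sqrt r)) * Real.cos (θ / 2)) r :=
    (hs.const_mul 2).mul_const _
  have h2 : HasDerivAt (fun θ' => pCoord r θ')
      (2 * Real.sqrt r * (-Real.sin (θ / 2) * (1 / 2))) θ :=
    hc.const_mul _
  have h3 : HasDerivAt (fun θ' => qCoord r θ')
      (-2 * Real.sqrt r * ((1 * Real.cos (θ / 2) + θ * (-Real.sin (θ / 2) * (1 / 2)))
        + (Real.log r - 2) * (Real.cos (θ / 2) * (1 / 2)))) θ :=
    (((hasDerivAt_id θ).mul hc).add (hS.const_mul _)).const_mul _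
  have h4 : HasDerivAt (fun r' => qCoord r' θ)
      (-2 * (1 / (2 * Real.sqrt r)) *
          (θ * Real.cos (θ / 2) + (Real.log r - 2) * Real.sin (θ / 2))
        + -2 * Real.sqrt r * (r⁻¹ * Real.sin (θ / 2))) r :=
    (hs.const_mul (-2)).mul (((hl.sub_const 2).mul_const _).const_add _)
  rw [h1.deriv, h2.deriv, h3.deriv, h4.deriv]
  have hsp : Real.sqrt r ≠ 0 := (Real.sqrt_pos.mpr hr0).ne'
  have hinv : r⁻¹ = (Real.sqrt r)⁻¹ * (Real.sqrt r)⁻¹ := by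
    rw [← mul_inv, Real.mul_self_sqrt hr0.le]
  have hcs := Real.sin_sq_add_cos_sq (θ / 2)
  rw [hinv]
  generalize Real.sqrt r = s at *
  generalize Real.log r = L at *
  generalize Real.sin (θ / 2) = S at *
  generalize Real.cos (θ / 2) = c at *
  field_simp
  linear_combination (-L) * hcs
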